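/- Let R be a ring, let C₁ →^{f₁} C₂ →^{f₂} C₃ → ⋯ be a countable direct system of finitely generated R-modules, let ε_n : C_n → ⊕_{k∈ℕ} C_k be the canonical inclusions, and let φ : ⊕_{n∈ℕ} C_n → ⊕_{n∈ℕ} C_n be the homomorphism determined by φ∘ε_n = ε_n − ε_{n+1}∘f_n. Then the exact sequence 0 → ⊕_{n∈ℕ} C_n →^{φ} ⊕_{n∈ℕ} C_n → lim C_n → 0 splits (i.e. there exists ψ : ⊕_{n∈ℕ} C_n → ⊕_{n∈ℕ} C_n with ψ∘φ = Id) if and only if for every R-module M the tower (Hom_R(C_n, M), Hom_R(f_n, M))_{n∈ℕ} satisfies the Mittag-Leffler condition. -/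

import Mathlib

/-!
A retraction `ψ` of `φ` is the same as a family `ψₙ : Cₙ → ⊕ C` with
`ψₙ - ψₙ₊₁ ∘ fₙ = εₙ`, that is, a preimage of `(εₙ)ₙ` under `1 - shift` on
`∏ₙ Hom(Cₙ, ⊕ C)`.

If `ψ` exists, iterating the relation gives
`ψₘ = ∑_{k ≤ i} ε_{m+k} f_{m,m+k} + ψ_{m+i+1} f_{m,m+i+1}`. As `Cₘ` is finitely generated, the
coordinate of index `m + i` of `ψₘ` vanishes for large `i`, so `f_{m,m+i}` factors through
`f_{m,m+i+1}` (`exists_factor`), and the images in `Hom(Cₘ, M)` are stationary from there on,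
for every `M`.

Conversely, apply the Mittag-Leffler condition to `M = ⊕ C` only: it makes `1 - shift`
surjective on the product of the tower, i.e. `lim¹ = 0` (`MittagLeffler.exists_sub_eq`).
Truncated sums `∑_{k < D n} λ_{n,n+k} a_{n+k}` solve the equation up to an error in the stable
images, and the stable images form a tower with surjective maps, where the equation is solved
recursively.
-/

/-!
STATEMENT 9 (Examples 2.4(1)): for a countable direct system `(Cₙ, fₙ)` of finitely
generated modules, the exact sequence `0 → ⊕ₙ Cₙ →^φ ⊕ₙ Cₙ → lim Cₙ → 0` splits
iff for every module `M` the tower `(Hom(Cₙ, M), Hom(fₙ, M))` satisfies the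
Mittag-Leffler condition.
-/

universe u

open DirectSum

variable {R : Type u} [Ring R]

/-- Composite `λ_m ∘ ⋯ ∘ λ_{m+k-1} : H_{m+k} → H_m` in a tower of abelian groups. -/
def towerComp {H : ℕ → Type v} [∀ n, AddCommGroup (H n)]
    (lam : ∀ n, H (n + 1) →+ H n) (m : ℕ) : (k : ℕ) → H (m + k) →+ H m
  | 0 => AddMonoidHom.id (H m)
  | k + 1 => (towerComp lam m k).comp (lam (m + k))

/-- The Mittag-Leffler condition: all the descending chains of images are stationary. -/
def MittagLeffler {H : ℕ → Type v} [∀ n, AddCommGroup (H n)]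
    (lam : ∀ n, H (n + 1) →+ H n) : Prop :=
  ∀ m, ∃ d, ∀ j, d ≤ j →
    Set.range ⇑(towerComp lam m j) = Set.range ⇑(towerComp lam m d)

/-- `Hom_R(fₙ, M) : Hom_R(C_{n+1}, M) → Hom_R(Cₙ, M)`, `g ↦ g ∘ fₙ`. -/
def homMap {C : ℕ → Type u} [∀ n, AddCommGroup (C n)] [∀ n, Module R (C n)]
    (f : ∀ n, C n →ₗ[R] C (n + 1)) (M : Type v) [AddCommGroup M] [Module R M]
    (n : ℕ) : (C (n + 1) →ₗ[R] M) →+ (C n →ₗ[R] M) where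
  toFun g := g.comp (f n)
  map_zero' := by ext x; simp
  map_add' g h := by ext x; simp

/-- The map `φ : ⊕ₙ Cₙ → ⊕ₙ Cₙ` determined by `φ ∘ εₙ = εₙ - ε_{n+1} ∘ fₙ`. -/
noncomputable def phiMap (R : Type u) [Ring R] (C : ℕ → Type u)
    [∀ n, AddCommGroup (C n)] [∀ n, Module R (C n)]
    (f : ∀ n, C n →ₗ[R] C (n + 1)) : (⨁ n, C n) →ₗ[R] ⨁ n, C n :=
  DirectSum.toModule R ℕ (⨁ n, C n)
    (fun n => DirectSum.lof R ℕ C n - (DirectSum.lof R ℕ C (n + 1)).comp (f n))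

/-! ### The vanishing of `lim¹` -/

section Tower

variable {H : ℕ → Type*} [∀ n, AddCommGroup (H n)]

/-- The image of `H_{n+k}` in `H_n`, defined by recursion at the lower end of the tower, so that
`H_{n+1+k}` and `H_{n+(k+1)}` never need to be identified. -/
def towerImage (lam : ∀ n, H (n + 1) →+ H n) : (k n : ℕ) → AddSubgroup (H n)
  | 0, _ => ⊤
  | k + 1, n => (towerImage lam k (n + 1)).map (lam n)

/-- The image in `H_n` of the component `a_{n+k}` of a family `a`. -/
def towerPush (lam : ∀ n, H (n + 1) →+ H n) (a : ∀ n, H n) : (k n : ℕ) → H n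
  | 0, n => a n
  | k + 1, n => lam n (towerPush lam a k (n + 1))

theorem towerPush_mem (lam : ∀ n, H (n + 1) →+ H n) (a : ∀ n, H n) (k n : ℕ) :
    towerPush lam a k n ∈ towerImage lam k n := by
  induction k generalizing n with
  | zero => exact AddSubgroup.mem_top _
  | succ k ih => exact AddSubgroup.mem_map_of_mem _ (ih _)

theorem map_towerComp_towerImage (lam : ∀ n, H (n + 1) →+ H n) (m k j : ℕ) :
    (towerImage lam j (m + k)).map (towerComp lam m k) = towerImage lam (k + j) m := by
  induction k generalizing j with
  | zero => rw [Nat.zero_add]; exact AddSubgroup.map_id _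
  | succ k ih =>
    have h := ih (j + 1)
    rw [show k + (j + 1) = k + 1 + j by omega] at h
    rw [← h, towerImage, AddSubgroup.map_map]
    rfl

theorem range_towerComp (lam : ∀ n, H (n + 1) →+ H n) (m k : ℕ) :
    Set.range (towerComp lam m k) = towerImage lam k m := by
  rw [← Nat.add_zero k, ← map_towerComp_towerImage lam m k 0]
  ext x
  simp [towerImage]

/-- A Mittag-Leffler tower has `lim¹ = 0`: the map `b ↦ (bₙ - λₙ bₙ₊₁)ₙ` is surjective on the
product of the tower. -/
theorem MittagLeffler.exists_sub_eq {lam : ∀ n, H (n + 1) →+ H n} (h : MittagLeffler lam)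
    (a : ∀ n, H n) : ∃ b : ∀ n, H n, ∀ n, b n - lam n (b (n + 1)) = a n := by
  choose d hd using h
  -- Stabilization bounds, made monotone in `n`.
  let D : ℕ → ℕ := fun n => ∑ i ∈ Finset.range (n + 1), d i
  have hdD (n : ℕ) : d n ≤ D n :=
    Finset.single_le_sum (f := d) (fun _ _ => Nat.zero_le _) (Finset.self_mem_range_succ n)
  have hmono (n : ℕ) : D n ≤ D (n + 1) := by
    simp only [D, Finset.sum_range_succ _ (n + 1)]
    omega
  have hstab (n j : ℕ) (hj : D n ≤ j) : towerImage lam j n = towerImage lam (D n) n := by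
    apply SetLike.coe_injective
    rw [← range_towerComp, ← range_towerComp, hd n j ((hdD n).trans hj), hd n _ (hdD n)]
  let S : ∀ n, AddSubgroup (H n) := fun n => towerImage lam (D n) n
  have hsurj (n : ℕ) (x : H n) (hx : x ∈ S n) : ∃ y ∈ S (n + 1), lam n y = x := by
    have hx' : x ∈ towerImage lam (D (n + 1) + 1) n := by
      rw [hstab n _ ((hmono n).trans (Nat.le_succ _))]
      exact hx
    exact hx'
  let c : ∀ n, H n := fun n => ∑ k ∈ Finset.range (D n), towerPush lam a k n
  let e : ∀ n, H n := fun n => a n - (c n - lam n (c (n + 1)))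
  have he (n : ℕ) : e n ∈ S n := by
    have hc : a n + lam n (c (n + 1)) =
        ∑ k ∈ Finset.range (D (n + 1) + 1), towerPush lam a k n := by
      rw [Finset.sum_range_succ', map_sum, add_comm]
      rfl
    have : e n = ∑ k ∈ Finset.Ico (D n) (D (n + 1) + 1), towerPush lam a k n := by
      rw [Finset.sum_Ico_eq_sub _ ((hmono n).trans (Nat.le_succ _)), ← hc]
      simp only [e, c]
      abel
    rw [this]
    refine AddSubgroup.sum_mem _ fun k hk => ?_
    have := towerPush_mem lam a k n
    rwa [hstab n k (Finset.mem_Ico.1 hk).1] at this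
  choose s hsS hs using hsurj
  let b' : ∀ n, S n := fun n => Nat.rec (motive := fun n => S n) 0
    (fun n x => ⟨s n (x - e n) ((S n).sub_mem x.2 (he n)), hsS _ _ _⟩) n
  have hb' (n : ℕ) : lam n (b' (n + 1)) = b' n - e n :=
    hs n _ ((S n).sub_mem (b' n).2 (he n))
  refine ⟨fun n => c n + b' n, fun n => ?_⟩
  rw [map_add, hb']
  simp only [e]
  abel

end Tower

/-! ### Transition maps of the direct system -/

section System

variable {C : ℕ → Type u} [∀ n, AddCommGroup (C n)] [∀ n, Module R (C n)]

/-- The transition map `f_{m,m+k} : C_m → C_{m+k}`. -/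
def transMap (f : ∀ n, C n →ₗ[R] C (n + 1)) (m : ℕ) : (k : ℕ) → C m →ₗ[R] C (m + k)
  | 0 => LinearMap.id
  | k + 1 => (f (m + k)).comp (transMap f m k)

theorem towerComp_homMap (f : ∀ n, C n →ₗ[R] C (n + 1)) (M : Type*) [AddCommGroup M]
    [Module R M] (m k : ℕ) (g : C (m + k) →ₗ[R] M) :
    towerComp (H := fun n => C n →ₗ[R] M) (homMap f M) m k g = g.comp (transMap f m k) := by
  induction k with
  | zero => rfl
  | succ k ih => exact ih (g.comp (f (m + k)))

theorem comp_phiMap_eq_id_iff (f : ∀ n, C n →ₗ[R] C (n + 1)) (ψ : (⨁ n, C n) →ₗ[R] ⨁ n, C n) :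
    ψ.comp (phiMap R C f) = LinearMap.id ↔
      ∀ n x, ψ (lof R ℕ C n x) - ψ (lof R ℕ C (n + 1) (f n x)) = lof R ℕ C n x := by
  constructor
  · intro h n x
    have := LinearMap.congr_fun h (lof R ℕ C n x)
    simpa [phiMap, toModule_lof] using this
  · intro h
    refine DirectSum.linearMap_ext R fun n => LinearMap.ext fun x => ?_
    simpa [phiMap, toModule_lof] using h n x

/-- A linear map from a finitely generated module to `⊕ C` has only finitely many nonzero
coordinates. -/
theorem exists_bound {N : Type*} [AddCommGroup N] [Module R N] [Module.Finite R N]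
    (g : N →ₗ[R] ⨁ n, C n) : ∃ d, ∀ i, d ≤ i → ∀ x, g x i = 0 := by
  classical
  obtain ⟨T, hT⟩ := (Module.Finite.fg_top : (⊤ : Submodule R N).FG)
  refine ⟨T.sup fun t => (DFinsupp.support (g t)).sup Nat.succ, fun i hi x => ?_⟩
  have hx : x ∈ Submodule.span R (T : Set N) := hT ▸ Submodule.mem_top
  suffices h : Submodule.span R (T : Set N) ≤ LinearMap.ker ((component R ℕ C i).comp g) from
    h hx
  refine Submodule.span_le.2 fun t ht => ?_
  change g t i = 0
  by_contra hne
  have h1 : i + 1 ≤ (DFinsupp.support (g t)).sup Nat.succ :=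
    Finset.le_sup (f := Nat.succ) (DFinsupp.mem_support_iff.2 hne)
  have h2 := Finset.le_sup (f := fun t => (DFinsupp.support (g t)).sup Nat.succ) ht
  exact absurd (h1.trans (h2.trans hi)) (by omega)

/-- If `φ` has a retraction, then, for large `i`, the map `f_{m,m+i}` factors through
`f_{m,m+i+1}`. -/
theorem exists_factor (f : ∀ n, C n →ₗ[R] C (n + 1)) (m : ℕ) [Module.Finite R (C m)]
    (ψ : (⨁ n, C n) →ₗ[R] ⨁ n, C n) (hψ : ψ.comp (phiMap R C f) = LinearMap.id) :
    ∃ d, ∀ i, d ≤ i → ∃ g : C (m + (i + 1)) →ₗ[R] C (m + i),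
      transMap f m i = g.comp (transMap f m (i + 1)) := by
  rw [comp_phiMap_eq_id_iff] at hψ
  obtain ⟨d, hd⟩ := exists_bound (ψ.comp (lof R ℕ C m))
  have hsum (k : ℕ) (x : C m) : ψ (lof R ℕ C m x) =
      ∑ j ∈ Finset.range k, lof R ℕ C (m + j) (transMap f m j x) +
        ψ (lof R ℕ C (m + k) (transMap f m k x)) := by
    induction k with
    | zero => simp [transMap]
    | succ k ih =>
      rw [ih, Finset.sum_range_succ, add_assoc, sub_eq_iff_eq_add.1 (hψ (m + k) _)]
      rfl
  refine ⟨d, fun i hi =>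
    ⟨-((component R ℕ C (m + i)).comp (ψ.comp (lof R ℕ C (m + (i + 1))))), ?_⟩⟩
  ext x
  have h0 : component R ℕ C (m + i) (ψ (lof R ℕ C m x)) = 0 := hd (m + i) (by omega) x
  have hz : ∑ j ∈ Finset.range i,
      component R ℕ C (m + i) (lof R ℕ C (m + j) (transMap f m j x)) = 0 :=
    Finset.sum_eq_zero fun j hj => DFinsupp.single_eq_of_ne (by
      have := Finset.mem_range.1 hj
      omega)
  rw [hsum (i + 1), Finset.sum_range_succ, map_add, map_add, map_sum, hz, zero_add,
    component.lof_self] at h0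
  exact eq_neg_of_add_eq_zero_left h0

end System

theorem splits_iff_MittagLeffler_for_all_modules
    (C : ℕ → Type u) [∀ n, AddCommGroup (C n)] [∀ n, Module R (C n)]
    [∀ n, Module.Finite R (C n)] (f : ∀ n, C n →ₗ[R] C (n + 1)) :
    (∃ ψ : (⨁ n, C n) →ₗ[R] ⨁ n, C n, ψ.comp (phiMap R C f) = LinearMap.id) ↔
      ∀ (M : Type u) [AddCommGroup M] [Module R M],
        MittagLeffler (H := fun n => C n →ₗ[R] M) (homMap f M) := by
  constructor
  · rintro ⟨ψ, hψ⟩ M _ _ m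
    obtain ⟨d, hd⟩ := exists_factor f m ψ hψ
    refine ⟨d, fun j hj => ?_⟩
    induction j, hj using Nat.le_induction with
    | base => rfl
    | succ j hj ih =>
      rw [← ih]
      apply Set.Subset.antisymm
      · rintro _ ⟨g, rfl⟩
        exact ⟨g.comp (f (m + j)), rfl⟩
      · rintro _ ⟨g, rfl⟩
        obtain ⟨q, hq⟩ := hd j hj
        refine ⟨g.comp q, ?_⟩
        rw [towerComp_homMap, towerComp_homMap, hq, LinearMap.comp_assoc]
  · intro h
    obtain ⟨b, hb⟩ := (h (⨁ n, C n)).exists_sub_eq (fun n => lof R ℕ C n)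
    refine ⟨toModule R ℕ _ b, (comp_phiMap_eq_id_iff f _).2 fun n x => ?_⟩
    rw [toModule_lof, toModule_lof]
    exact LinearMap.congr_fun (hb n) x
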